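/- There exist positive constants c₁, c₂ and x₀ such that for all x ≥ x₀, c₁ √x ≤ ∫₀¹ |∑_{n ≤ x} τ(n) e(nα)| dα ≤ c₂ √x log x, where τ is the divisor function and e(α) = e^{2πiα}. -/

import Mathlib

open Finset intervalIntegral

/-- The additive character `e(t) = exp (2πit)`. -/
noncomputable def addExp (t : ℝ) : ℂ := Complex.exp (2 * Real.pi * Complex.I * t)

lemma addExp_add (s t : ℝ) : addExp (s + t) = addExp s * addExp t := by
  simp only [addExp, ← Complex.exp_add]
  push_cast
  ring_nf

lemma addExp_zero : addExp 0 = 1 := by simp [addExp]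

lemma addExp_int (n : ℤ) : addExp n = 1 := by
  rw [addExp, Complex.exp_eq_one_iff]
  exact ⟨n, by push_cast; ring⟩

lemma addExp_nat_mul (n : ℕ) (t : ℝ) : addExp (n * t) = addExp t ^ n := by
  rw [addExp, addExp, ← Complex.exp_nat_mul]
  push_cast
  ring_nf

lemma addExp_eq_cos_add_sin (t : ℝ) :
    addExp t = Real.cos (2 * Real.pi * t) + Real.sin (2 * Real.pi * t) * Complex.I := by
  rw [addExp, show 2 * (Real.pi : ℂ) * Complex.I * t = ((2 * Real.pi * t : ℝ) : ℂ) * Complex.I by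
    push_cast; ring, Complex.exp_mul_I, Complex.ofReal_cos, Complex.ofReal_sin]

lemma addExp_re (t : ℝ) : (addExp t).re = Real.cos (2 * Real.pi * t) := by
  simp [addExp_eq_cos_add_sin, -Complex.ofReal_cos, -Complex.ofReal_sin]

lemma norm_addExp (t : ℝ) : ‖addExp t‖ = 1 := by
  rw [addExp, show 2 * (Real.pi : ℂ) * Complex.I * t = ((2 * Real.pi * t : ℝ) : ℂ) * Complex.I by
    push_cast; ring, Complex.norm_exp_ofReal_mul_I]

lemma conj_addExp (t : ℝ) : (starRingEnd ℂ) (addExp t) = addExp (-t) := by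
  rw [addExp, addExp, ← Complex.exp_conj]
  simp [map_ofNat (starRingEnd ℂ) 2]

@[fun_prop]
lemma continuous_addExp : Continuous addExp := by
  unfold addExp
  fun_prop

lemma norm_addExp_sub_one (t : ℝ) : ‖addExp t - 1‖ = 2 * |Real.sin (Real.pi * t)| := by
  rw [addExp, show 2 * (Real.pi : ℂ) * Complex.I * t = Complex.I * ((2 * Real.pi * t : ℝ) : ℂ) by
    push_cast; ring, Complex.norm_exp_I_mul_ofReal_sub_one, norm_mul]
  simp only [Real.norm_eq_abs, abs_two]
  ring_nf

/-- The Dirichlet kernel bound away from the integers. -/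
lemma norm_sum_range_addExp_mul_le (M : ℕ) (t : ℝ) :
    ‖∑ j ∈ range M, addExp (j * t)‖ * |Real.sin (Real.pi * t)| ≤ 1 := by
  have h : (∑ j ∈ range M, addExp (j * t)) * (addExp t - 1) = addExp (M * t) - 1 := by
    simp_rw [addExp_nat_mul]
    exact geom_sum_mul _ _
  have h2 := congrArg norm h
  rw [norm_mul, norm_addExp_sub_one] at h2
  have h3 : ‖addExp (M * t) - 1‖ ≤ 2 := by
    refine (norm_sub_le _ _).trans ?_
    rw [norm_addExp, norm_one]
    norm_num
  linarith

lemma norm_sum_range_addExp_le (M : ℕ) (t : ℝ) : ‖∑ j ∈ range M, addExp (j * t)‖ ≤ M := by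
  refine (norm_sum_le _ _).trans ?_
  simp [norm_addExp]

lemma norm_sum_Icc_addExp (M : ℕ) (t : ℝ) :
    ‖∑ j ∈ Icc 1 M, addExp (j * t)‖ = ‖∑ j ∈ range M, addExp (j * t)‖ := by
  have h : ∑ j ∈ Icc 1 M, addExp (j * t) = addExp t * ∑ j ∈ range M, addExp (j * t) := by
    rw [← Finset.Ico_succ_right_eq_Icc, Finset.sum_Ico_eq_sum_range, Finset.mul_sum]
    refine Finset.sum_congr (by simp) fun j _ => ?_
    rw [← addExp_add]
    push_cast
    ring_nf
  rw [h, norm_mul, norm_addExp, one_mul]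

lemma two_mul_min_le_sin {t : ℝ} (h0 : 0 ≤ t) (h1 : t ≤ 1) :
    2 * min t (1 - t) ≤ Real.sin (Real.pi * t) := by
  have key : ∀ s : ℝ, 0 ≤ s → s ≤ 1 / 2 → 2 * s ≤ Real.sin (Real.pi * s) := by
    intro s hs hs'
    have h := Real.mul_le_sin (x := Real.pi * s) (by positivity)
      (by nlinarith [Real.pi_pos])
    have : 2 / Real.pi * (Real.pi * s) = 2 * s := by field_simp
    linarith
  rcases le_total t (1 / 2) with h | h
  · rw [min_eq_left (by linarith)]
    exact key t h0 h
  · rw [min_eq_right (by linarith)]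
    have := key (1 - t) (by linarith) (by linarith)
    rwa [show Real.pi * (1 - t) = Real.pi - Real.pi * t by ring, Real.sin_pi_sub] at this

lemma norm_dirichletKernel_le {M : ℕ} (hM : 1 ≤ M) {t : ℝ} (h0 : 0 ≤ t) (h1 : t ≤ 1) :
    ‖∑ j ∈ Icc 1 M, addExp (j * t)‖ ≤ 2 / (1 / M + t) + 2 / (1 / M + (1 - t)) := by
  rw [norm_sum_Icc_addExp]
  set D := ‖∑ j ∈ range M, addExp (j * t)‖ with hD
  have hM' : (0 : ℝ) < M := by exact_mod_cast hM
  have hδ : (0 : ℝ) < 1 / M := by positivity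
  have hD0 : 0 ≤ D := norm_nonneg _
  have hDM : D * (1 / M) ≤ 1 := by
    have := norm_sum_range_addExp_le M t
    rw [mul_one_div, div_le_one hM']
    exact this
  have hDs : D * (2 * min t (1 - t)) ≤ 1 :=
    (mul_le_mul_of_nonneg_left ((two_mul_min_le_sin h0 h1).trans (le_abs_self _)) hD0).trans
      (norm_sum_range_addExp_mul_le M t)
  have p1 : 0 < 1 / (M : ℝ) + t := by positivity
  have p2 : 0 < 1 / (M : ℝ) + (1 - t) := by linarith
  rcases le_total t (1 - t) with h | h
  · rw [min_eq_left h] at hDs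
    have : D ≤ 2 / (1 / M + t) := by
      rw [le_div_iff₀ p1]
      linarith
    have : 0 ≤ 2 / (1 / (M : ℝ) + (1 - t)) := by positivity
    linarith
  · rw [min_eq_right h] at hDs
    have : D ≤ 2 / (1 / M + (1 - t)) := by
      rw [le_div_iff₀ p2]
      linarith
    have : 0 ≤ 2 / (1 / (M : ℝ) + t) := by positivity
    linarith

/-- The `L¹` norm of the Dirichlet kernel grows at most logarithmically. -/
lemma integral_norm_dirichletKernel_le (M : ℕ) :
    ∫ t in (0 : ℝ)..1, ‖∑ j ∈ Icc 1 M, addExp (j * t)‖ ≤ 4 * Real.log (M + 1) := by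
  rcases Nat.eq_zero_or_pos M with rfl | hM
  · simp
  have hM' : (0 : ℝ) < M := by exact_mod_cast hM
  have hδ : (0 : ℝ) < 1 / M := by positivity
  have c1 : IntervalIntegrable (fun t : ℝ => 2 / (1 / M + t)) MeasureTheory.volume 0 1 := by
    apply ContinuousOn.intervalIntegrable
    refine continuousOn_const.div (by fun_prop) fun t ht => ?_
    rw [Set.uIcc_of_le zero_le_one] at ht
    have := ht.1
    positivity
  have c2 : IntervalIntegrable (fun t : ℝ => 2 / (1 / M + (1 - t)))
      MeasureTheory.volume 0 1 := by
    apply ContinuousOn.intervalIntegrable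
    refine continuousOn_const.div (by fun_prop) fun t ht => ?_
    rw [Set.uIcc_of_le zero_le_one] at ht
    have := ht.2
    have : 0 < 1 / (M : ℝ) + (1 - t) := by linarith
    exact this.ne'
  have i1 : ∫ t in (0 : ℝ)..1, 2 / (1 / (M : ℝ) + t) = 2 * Real.log (M + 1) := by
    have h := integral_comp_add_left (a := 0) (b := 1) (fun t : ℝ => 2 * t⁻¹) (1 / (M : ℝ))
    simp only [← div_eq_mul_inv] at h
    rw [h]
    simp only [div_eq_mul_inv (2 : ℝ)]
    rw [intervalIntegral.integral_const_mul, integral_inv_of_pos (by linarith) (by linarith)]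
    congr 2
    field_simp
    ring
  have i2 : ∫ t in (0 : ℝ)..1, 2 / (1 / (M : ℝ) + (1 - t)) = 2 * Real.log (M + 1) := by
    have h := integral_comp_sub_left (a := 0) (b := 1) (fun t : ℝ => 2 / (1 / (M : ℝ) + t)) 1
    rw [h]
    simpa using i1
  calc _ ≤ ∫ t in (0 : ℝ)..1, (2 / (1 / (M : ℝ) + t) + 2 / (1 / M + (1 - t))) := by
        refine intervalIntegral.integral_mono_on zero_le_one ?_ (c1.add c2) fun t ht => ?_
        · exact Continuous.intervalIntegrable (by fun_prop) _ _
        · exact norm_dirichletKernel_le hM ht.1 ht.2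
    _ = 4 * Real.log (M + 1) := by
        rw [intervalIntegral.integral_add c1 c2, i1, i2]
        ring

lemma Function.Periodic.intervalIntegral_comp_nat_mul {f : ℝ → ℝ} (hf : Function.Periodic f 1)
    (hc : Continuous f) {u : ℕ} (hu : u ≠ 0) :
    ∫ t in (0 : ℝ)..1, f (u * t) = ∫ t in (0 : ℝ)..1, f t := by
  have hu' : (u : ℝ) ≠ 0 := by exact_mod_cast hu
  rw [intervalIntegral.integral_comp_mul_left f hu']
  have h := hf.intervalIntegral_add_zsmul_eq u 0 fun a b => hc.intervalIntegrable a b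
  simp only [zero_add, zsmul_eq_mul, mul_one, Int.cast_natCast] at h
  simp only [mul_zero, mul_one, h, smul_eq_mul]
  field_simp

lemma integral_norm_dirichletKernel_comp_mul_le (M : ℕ) {u : ℕ} (hu : u ≠ 0) :
    ∫ t in (0 : ℝ)..1, ‖∑ j ∈ Icc 1 M, addExp (j * (u * t))‖ ≤ 4 * Real.log (M + 1) := by
  have hper : Function.Periodic (fun t : ℝ => ‖∑ j ∈ Icc 1 M, addExp (j * t)‖) 1 := by
    intro t
    have (j : ℕ) : addExp (j * (t + 1)) = addExp (j * t) := by
      rw [mul_add, mul_one, addExp_add]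
      have := addExp_int j
      simp only [Int.cast_natCast] at this
      rw [this, mul_one]
    simp only [this]
  rw [hper.intervalIntegral_comp_nat_mul (by fun_prop) hu]
  exact integral_norm_dirichletKernel_le M

/-- A divisor sum as a sum over a square. -/
lemma sum_card_divisors_mul (N : ℕ) (f : ℕ → ℂ) (hf : ∀ n, N < n → f n = 0) :
    ∑ n ∈ Icc 1 N, (n.divisors.card : ℂ) * f n = ∑ u ∈ Icc 1 N, ∑ m ∈ Icc 1 N, f (u * m) := by
  have h1 : ∀ u ∈ Icc 1 N, ∑ m ∈ Icc 1 N, f (u * m) =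
      ∑ n ∈ Icc 1 N, if u ∣ n then f n else 0 := by
    intro u hu
    rw [mem_Icc] at hu
    rw [← Finset.sum_filter]
    have : ∑ m ∈ Icc 1 N, f (u * m) = ∑ m ∈ (Icc 1 N).filter (fun m => u * m ≤ N), f (u * m) := by
      rw [Finset.sum_filter]
      refine Finset.sum_congr rfl fun m _ => ?_
      split_ifs with h
      · rfl
      · exact hf _ (not_le.1 h)
    rw [this]
    refine Finset.sum_bij' (fun m _ => u * m) (fun n _ => n / u) ?_ ?_ ?_ ?_ ?_
    · intro m hm
      simp only [mem_filter, mem_Icc] at hm ⊢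
      exact ⟨⟨Nat.mul_pos hu.1 hm.1.1, hm.2⟩, dvd_mul_right _ _⟩
    · intro n hn
      simp only [mem_filter, mem_Icc] at hn ⊢
      obtain ⟨⟨h1, h2⟩, k, rfl⟩ := hn
      rw [Nat.mul_div_cancel_left _ hu.1]
      exact ⟨⟨Nat.pos_of_mul_pos_left h1, (Nat.le_mul_of_pos_left k hu.1).trans h2⟩, h2⟩
    · intro m _
      exact Nat.mul_div_cancel_left _ hu.1
    · intro n hn
      simp only [mem_filter] at hn
      exact Nat.mul_div_cancel' hn.2
    · intro m _
      rfl
  rw [Finset.sum_congr rfl h1, Finset.sum_comm]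
  refine Finset.sum_congr rfl fun n hn => ?_
  rw [← Finset.sum_filter, Finset.sum_const, nsmul_eq_mul]
  congr 3
  ext d
  rw [mem_Icc] at hn
  simp only [Nat.mem_divisors, mem_filter, mem_Icc]
  refine ⟨fun h => ⟨⟨Nat.pos_of_dvd_of_pos h.1 hn.1, (Nat.le_of_dvd hn.1 h.1).trans hn.2⟩, h.1⟩,
    fun h => ⟨h.2, by omega⟩⟩

/-- Dirichlet's hyperbola method with a general cutoff `φ`. -/
lemma sum_card_divisors_mul_eq_hyperbola (N : ℕ) (f : ℕ → ℂ) (hf : ∀ n, N < n → f n = 0)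
    (φ : ℕ → ℝ) (hφ : ∀ u m, u * m ≤ N → φ u = 1 ∨ φ m = 1) :
    ∑ n ∈ Icc 1 N, (n.divisors.card : ℂ) * f n =
      ∑ u ∈ Icc 1 N, ∑ m ∈ Icc 1 N, (φ u : ℂ) * (2 - φ m) * f (u * m) := by
  have h0 : ∀ u m, (1 - φ u : ℂ) * (1 - φ m) * f (u * m) = 0 := by
    intro u m
    rcases le_or_gt (u * m) N with h | h
    · rcases hφ u m h with h | h <;> simp [h]
    · simp [hf _ h]
  have h1 : ∀ u m, f (u * m) = (φ u : ℂ) * f (u * m) + φ m * f (u * m)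
      - φ u * φ m * f (u * m) := by
    intro u m
    linear_combination h0 u m
  rw [sum_card_divisors_mul N f hf]
  have h2 : ∑ u ∈ Icc 1 N, ∑ m ∈ Icc 1 N, (φ m : ℂ) * f (u * m) =
      ∑ u ∈ Icc 1 N, ∑ m ∈ Icc 1 N, (φ u : ℂ) * f (u * m) := by
    rw [Finset.sum_comm]
    simp_rw [mul_comm]
  calc _ = ∑ u ∈ Icc 1 N, ∑ m ∈ Icc 1 N, ((φ u : ℂ) * f (u * m) + φ m * f (u * m)
      - φ u * φ m * f (u * m)) :=
        Finset.sum_congr rfl fun u _ => Finset.sum_congr rfl fun m _ => h1 u m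
    _ = ∑ u ∈ Icc 1 N, ∑ m ∈ Icc 1 N, ((φ u : ℂ) * f (u * m) + φ u * f (u * m)
      - φ u * φ m * f (u * m)) := by
        simp only [Finset.sum_sub_distrib, Finset.sum_add_distrib, h2]
    _ = _ := Finset.sum_congr rfl fun u _ => Finset.sum_congr rfl fun m _ => by ring

/-- The exponential sum `∑_{n ≤ N} τ(n) e(nα)`. -/
noncomputable def divisorExpSum (N : ℕ) (α : ℝ) : ℂ :=
  ∑ n ∈ Icc 1 N, (n.divisors.card : ℂ) * addExp (n * α)

@[fun_prop]
lemma continuous_divisorExpSum (N : ℕ) : Continuous (divisorExpSum N) := by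
  unfold divisorExpSum
  fun_prop

lemma norm_divisorExpSum_le (N : ℕ) (α : ℝ) :
    ‖divisorExpSum N α‖ ≤ ∑ u ∈ Icc 1 N.sqrt, (2 * ‖∑ j ∈ Icc 1 (N / u), addExp (j * (u * α))‖
      + ‖∑ j ∈ Icc 1 N.sqrt, addExp (j * (u * α))‖) := by
  set s := N.sqrt with hs
  have hsN : s ≤ N := Nat.sqrt_le_self N
  have hss : s * s ≤ N := Nat.sqrt_le N
  have key := sum_card_divisors_mul_eq_hyperbola N
    (fun n => if n ≤ N then addExp (n * α) else 0) (fun n hn => by simp [hn])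
    (fun u => if u ≤ s then 1 else 0) (by
      intro u m h
      by_contra! hc
      have h1 : s + 1 ≤ u := by
        by_contra h'
        exact hc.1 (if_pos (by omega))
      have h2 : s + 1 ≤ m := by
        by_contra h'
        exact hc.2 (if_pos (by omega))
      have := Nat.mul_le_mul h1 h2
      have := Nat.lt_succ_sqrt N
      simp only [Nat.succ_eq_add_one, ← hs] at this
      omega)
  have e1 : divisorExpSum N α = ∑ u ∈ Icc 1 s,
      (2 * ∑ j ∈ Icc 1 (N / u), addExp (j * (u * α)) - ∑ j ∈ Icc 1 s, addExp (j * (u * α))) := by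
    have : divisorExpSum N α = ∑ n ∈ Icc 1 N, (n.divisors.card : ℂ) *
        (if n ≤ N then addExp (n * α) else 0) := by
      refine Finset.sum_congr rfl fun n hn => ?_
      rw [if_pos (mem_Icc.1 hn).2]
    rw [this, key]
    have hsub : (Icc 1 N).filter (fun u => u ≤ s) = Icc 1 s := by
      ext u
      simp only [mem_filter, mem_Icc]
      omega
    rw [← hsub, Finset.sum_filter]
    refine Finset.sum_congr rfl fun u hu => ?_
    rw [mem_Icc] at hu
    split_ifs with hus
    · have hsub2 : (Icc 1 N).filter (fun m => u * m ≤ N) = Icc 1 (N / u) := by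
        ext m
        simp only [mem_filter, mem_Icc, Nat.le_div_iff_mul_le hu.1]
        constructor
        · rintro ⟨h1, h2⟩
          exact ⟨h1.1, by linarith⟩
        · rintro ⟨h1, h2⟩
          exact ⟨⟨h1, by nlinarith⟩, by linarith⟩
      rw [← hsub2, hsub, ← hsub, Finset.sum_filter, Finset.sum_filter, Finset.mul_sum,
        ← Finset.sum_sub_distrib]
      refine Finset.sum_congr rfl fun m hm => ?_
      have ha : ((u * m : ℕ) : ℝ) * α = m * (u * α) := by push_cast; ring
      rw [ha]
      by_cases hm' : m ≤ s
      · have : u * m ≤ N := (Nat.mul_le_mul hus hm').trans hss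
        simp [hm', this]
        ring
      · simp [hm']
    · simp
  rw [e1]
  refine (norm_sum_le _ _).trans (Finset.sum_le_sum fun u _ => ?_)
  refine (norm_sub_le _ _).trans ?_
  rw [norm_mul]
  simp

lemma integral_norm_divisorExpSum_le (N : ℕ) :
    ∫ α in (0 : ℝ)..1, ‖divisorExpSum N α‖ ≤ 12 * N.sqrt * Real.log (N + 1) := by
  calc _ ≤ ∫ α in (0 : ℝ)..1, ∑ u ∈ Icc 1 N.sqrt,
        (2 * ‖∑ j ∈ Icc 1 (N / u), addExp (j * (u * α))‖
        + ‖∑ j ∈ Icc 1 N.sqrt, addExp (j * (u * α))‖) := by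
        refine intervalIntegral.integral_mono zero_le_one ?_ ?_ fun α => norm_divisorExpSum_le N α
        · exact Continuous.intervalIntegrable (by fun_prop) _ _
        · exact Continuous.intervalIntegrable (by fun_prop) _ _
    _ = ∑ u ∈ Icc 1 N.sqrt, (2 * (∫ α in (0 : ℝ)..1, ‖∑ j ∈ Icc 1 (N / u), addExp (j * (u * α))‖)
        + ∫ α in (0 : ℝ)..1, ‖∑ j ∈ Icc 1 N.sqrt, addExp (j * (u * α))‖) := by
        rw [intervalIntegral.integral_finsetSum
          fun u _ => Continuous.intervalIntegrable (by fun_prop) _ _]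
        refine Finset.sum_congr rfl fun u _ => ?_
        rw [intervalIntegral.integral_add, intervalIntegral.integral_const_mul]
        · exact Continuous.intervalIntegrable (by fun_prop) _ _
        · exact Continuous.intervalIntegrable (by fun_prop) _ _
    _ ≤ ∑ u ∈ Icc 1 N.sqrt, 12 * Real.log (N + 1) := by
        refine Finset.sum_le_sum fun u hu => ?_
        have hu0 : u ≠ 0 := by
          have := (mem_Icc.1 hu).1
          omega
        have h1 := integral_norm_dirichletKernel_comp_mul_le (N / u) hu0
        have h2 := integral_norm_dirichletKernel_comp_mul_le N.sqrt hu0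
        have l1 : Real.log ((N / u : ℕ) + 1) ≤ Real.log (N + 1) := by
          have : ((N / u : ℕ) : ℝ) ≤ N := by exact_mod_cast Nat.div_le_self N u
          exact Real.log_le_log (by positivity) (by linarith)
        have l2 : Real.log ((N.sqrt : ℕ) + 1) ≤ Real.log (N + 1) := by
          have : ((N.sqrt : ℕ) : ℝ) ≤ N := by exact_mod_cast Nat.sqrt_le_self N
          exact Real.log_le_log (by positivity) (by linarith)
        linarith
    _ = _ := by
        simp
        ring

lemma integral_addExp_int_mul (k : ℤ) :
    ∫ t in (0 : ℝ)..1, addExp (k * t) = if k = 0 then 1 else 0 := by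
  split_ifs with hk
  · simp [hk, addExp_zero]
  · have hc : (2 * Real.pi * Complex.I * k : ℂ) ≠ 0 := by
      simp [hk, Real.pi_ne_zero]
    have h := integral_exp_mul_complex (a := 0) (b := 1) hc
    have h1 := addExp_int k
    rw [addExp] at h1
    have e1 : ∀ t : ℝ, addExp (k * t) = Complex.exp (2 * Real.pi * Complex.I * k * t) := by
      intro t
      rw [addExp]
      push_cast
      ring_nf
    simp_rw [e1, h]
    push_cast at h1
    simp [h1]

/-- The Fejér kernel, as the normalised square of a Dirichlet kernel. -/
noncomputable def fejerKernel (N : ℕ) (t : ℝ) : ℝ :=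
  ‖∑ j ∈ range N, addExp (j * t)‖ ^ 2 / N

@[fun_prop]
lemma continuous_fejerKernel (N : ℕ) : Continuous (fejerKernel N) := by
  unfold fejerKernel
  fun_prop

lemma fejerKernel_nonneg (N : ℕ) (t : ℝ) : 0 ≤ fejerKernel N t := by
  unfold fejerKernel
  positivity

lemma fejerKernel_eq_sum (N : ℕ) (t : ℝ) :
    (fejerKernel N t : ℂ) = (1 / N) * ∑ j ∈ range N, ∑ l ∈ range N,
      addExp (((j : ℤ) - (l : ℤ) : ℤ) * t) := by
  have h : ((‖∑ j ∈ range N, addExp (j * t)‖ ^ 2 : ℝ) : ℂ) = ∑ j ∈ range N, ∑ l ∈ range N,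
      addExp (((j : ℤ) - (l : ℤ) : ℤ) * t) := by
    rw [Complex.ofReal_pow, ← Complex.mul_conj', map_sum, Finset.sum_mul_sum]
    refine Finset.sum_congr rfl fun j _ => Finset.sum_congr rfl fun l _ => ?_
    rw [conj_addExp, ← addExp_add]
    push_cast
    ring_nf
  rw [← h, fejerKernel]
  push_cast
  ring

lemma integral_addExp_mul_fejerKernel {N n : ℕ} (hn : n ≤ N) (α : ℝ) :
    ∫ t in (0 : ℝ)..1, addExp (n * t) * (fejerKernel N (α - t) : ℂ) =
      ((N - n : ℕ) : ℂ) / N * addExp (n * α) := by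
  have e1 : ∀ t, addExp (n * t) * (fejerKernel N (α - t) : ℂ) = (1 / N) *
      ∑ j ∈ range N, ∑ l ∈ range N, addExp (((j : ℤ) - (l : ℤ) : ℤ) * α) *
        addExp (((n : ℤ) - j + l : ℤ) * t) := by
    intro t
    rw [fejerKernel_eq_sum, mul_left_comm, Finset.mul_sum]
    congr 1
    refine Finset.sum_congr rfl fun j _ => ?_
    rw [Finset.mul_sum]
    refine Finset.sum_congr rfl fun l _ => ?_
    rw [← addExp_add, ← addExp_add]
    push_cast
    ring_nf
  simp_rw [e1]
  rw [intervalIntegral.integral_const_mul, intervalIntegral.integral_finsetSum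
    fun j _ => Continuous.intervalIntegrable (by fun_prop) _ _]
  have e2 : ∀ j ∈ range N, ∫ t in (0 : ℝ)..1, ∑ l ∈ range N,
      addExp (((j : ℤ) - (l : ℤ) : ℤ) * α) * addExp (((n : ℤ) - j + l : ℤ) * t) =
      ∑ l ∈ range N, if j = n + l then addExp (n * α) else 0 := by
    intro j _
    rw [intervalIntegral.integral_finsetSum
      fun l _ => Continuous.intervalIntegrable (by fun_prop) _ _]
    refine Finset.sum_congr rfl fun l _ => ?_
    rw [intervalIntegral.integral_const_mul, integral_addExp_int_mul]
    by_cases h : j = n + l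
    · subst h
      simp
    · rw [if_neg h, if_neg (by omega), mul_zero]
  rw [Finset.sum_congr rfl e2, Finset.sum_comm]
  have e3 : ∀ l ∈ range N, (∑ j ∈ range N, if j = n + l then addExp (n * α) else 0) =
      if l < N - n then addExp (n * α) else 0 := by
    intro l _
    rw [Finset.sum_ite_eq']
    simp only [mem_range]
    refine if_congr (by omega) rfl rfl
  rw [Finset.sum_congr rfl e3, ← Finset.sum_filter, Finset.sum_const, nsmul_eq_mul]
  have : ((range N).filter fun l => l < N - n) = range (N - n) := by
    ext l
    simp only [mem_filter, mem_range]
    omega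
  rw [this, card_range]
  ring

/-- The Fejér means of the divisor exponential sum. -/
noncomputable def divisorFejerMean (N : ℕ) (α : ℝ) : ℂ :=
  ∑ n ∈ Icc 1 N, (n.divisors.card : ℂ) * (((N - n : ℕ) : ℂ) / N * addExp (n * α))

lemma divisorFejerMean_eq_integral (N : ℕ) (α : ℝ) :
    divisorFejerMean N α =
      ∫ t in (0 : ℝ)..1, divisorExpSum N t * (fejerKernel N (α - t) : ℂ) := by
  simp only [divisorExpSum, Finset.sum_mul]
  rw [intervalIntegral.integral_finsetSum
    fun j _ => Continuous.intervalIntegrable (by fun_prop) _ _]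
  refine Finset.sum_congr rfl fun n hn => ?_
  simp_rw [mul_assoc]
  rw [intervalIntegral.integral_const_mul, integral_addExp_mul_fejerKernel (mem_Icc.1 hn).2]

lemma two_mul_abs_sub_round_le (t : ℝ) : 2 * |t - round t| ≤ |Real.sin (Real.pi * t)| := by
  have h1 : |Real.sin (Real.pi * t)| = |Real.sin (Real.pi * |t - round t|)| := by
    have : Real.sin (Real.pi * (t - round t)) = (-1) ^ round t * Real.sin (Real.pi * t) := by
      rw [mul_sub, mul_comm Real.pi (round t : ℝ), Real.sin_sub_int_mul_pi]
    rcases abs_cases (t - round t) with ⟨h, -⟩ | ⟨h, -⟩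
    · rw [h, this, abs_mul, abs_zpow]
      simp
    · rw [h, mul_neg, Real.sin_neg, abs_neg, this, abs_mul, abs_zpow]
      simp
  have h2 := abs_sub_round t
  have h3 := two_mul_min_le_sin (abs_nonneg (t - round t)) (by linarith)
  rw [min_eq_left (by linarith)] at h3
  rw [h1]
  exact h3.trans (le_abs_self _)

lemma fejerKernel_le {N : ℕ} (hN : 1 ≤ N) (t : ℝ) :
    fejerKernel N t ≤ N * (6 / (1 + (⌊N * (t - round t)⌋ : ℝ) ^ 2)) := by
  have hN' : (0 : ℝ) < N := by exact_mod_cast hN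
  set p := t - round t with hp
  set D := ‖∑ j ∈ range N, addExp (j * t)‖ with hD
  have hD0 : 0 ≤ D := norm_nonneg _
  have h1 : D ≤ N := norm_sum_range_addExp_le N t
  have h2 : D * (2 * |p|) ≤ 1 := (mul_le_mul_of_nonneg_left (two_mul_abs_sub_round_le t) hD0).trans
    (norm_sum_range_addExp_mul_le N t)
  have h1' : D ^ 2 ≤ N ^ 2 := by gcongr
  have h2' : D ^ 2 * (4 * p ^ 2) ≤ 1 := by
    rw [← sq_abs p]
    have : 0 ≤ D * (2 * |p|) := by positivity
    nlinarith
  set j : ℝ := (⌊N * p⌋ : ℝ) with hj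
  have hj1 : j ≤ N * p := Int.floor_le _
  have hj2 : N * p < j + 1 := Int.lt_floor_add_one _
  have h3 : 1 + j ^ 2 ≤ 3 * (1 + (N * p) ^ 2) := by
    nlinarith [sq_nonneg (2 * (N * p) - j), sq_nonneg (N * p + 1)]
  rw [fejerKernel, ← hD, div_le_iff₀ hN', mul_div_assoc', div_mul_eq_mul_div,
    le_div_iff₀ (by positivity)]
  have h4 : D ^ 2 * (1 + j ^ 2) ≤ D ^ 2 * (3 * (1 + (N * p) ^ 2)) := by gcongr
  nlinarith [sq_nonneg (N : ℝ)]

lemma summable_inv_one_add_int_sq : Summable fun j : ℤ => 6 / (1 + (j : ℝ) ^ 2) := by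
  have h := (Real.summable_one_div_int_pow (p := 2)).2 (by norm_num)
  refine Summable.of_norm_bounded_eventually (h.mul_left 6) ?_
  filter_upwards [(Set.finite_singleton (0 : ℤ)).compl_mem_cofinite] with j hj
  have hj' : (j : ℝ) ≠ 0 := by simpa using hj
  have : 0 < (j : ℝ) ^ 2 := by positivity
  rw [Real.norm_of_nonneg (by positivity), mul_one_div]
  gcongr
  linarith

/-- A sum of translates of the Fejér kernel to well-spaced points is bounded. -/
lemma sum_fejerKernel_le {ι : Type*} {N : ℕ} (hN : 1 ≤ N) (s : Finset ι) (a : ι → ℝ)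
    (ha : ∀ i ∈ s, ∀ j ∈ s, i ≠ j → ∀ k : ℤ, 1 / (N : ℝ) ≤ |a i - a j - k|) (t : ℝ) :
    ∑ i ∈ s, fejerKernel N (a i - t) ≤ N * ∑' j : ℤ, 6 / (1 + (j : ℝ) ^ 2) := by
  have hN' : (0 : ℝ) < N := by exact_mod_cast hN
  set g : ι → ℤ := fun i => ⌊N * (a i - t - round (a i - t))⌋ with hg
  have hinj : Set.InjOn g s := by
    intro i hi j hj hij
    by_contra hne
    have h := ha i hi j hj hne (round (a i - t) - round (a j - t))
    have h1 := Int.abs_sub_lt_one_of_floor_eq_floor hij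
    rw [← mul_sub, abs_mul, abs_of_pos hN'] at h1
    rw [div_le_iff₀ hN'] at h
    have e : a i - t - round (a i - t) - (a j - t - round (a j - t)) =
      a i - a j - ((round (a i - t) - round (a j - t) : ℤ) : ℝ) := by
      push_cast
      ring
    rw [e] at h1
    linarith
  calc _ ≤ ∑ i ∈ s, N * (6 / (1 + (g i : ℝ) ^ 2)) :=
        Finset.sum_le_sum fun i _ => fejerKernel_le hN _
    _ = N * ∑ j ∈ s.image g, 6 / (1 + (j : ℝ) ^ 2) := by
        rw [Finset.sum_image hinj, Finset.mul_sum]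
    _ ≤ _ := by
        gcongr
        exact summable_inv_one_add_int_sq.sum_le_tsum _ fun j _ => by positivity

/-- An `L¹` large sieve inequality for the Fejér means of the divisor exponential sum. -/
lemma sum_norm_divisorFejerMean_le {ι : Type*} {N : ℕ} (hN : 1 ≤ N) (s : Finset ι) (a : ι → ℝ)
    (ha : ∀ i ∈ s, ∀ j ∈ s, i ≠ j → ∀ k : ℤ, 1 / (N : ℝ) ≤ |a i - a j - k|) :
    ∑ i ∈ s, ‖divisorFejerMean N (a i)‖ ≤
      N * (∑' j : ℤ, 6 / (1 + (j : ℝ) ^ 2)) * ∫ t in (0 : ℝ)..1, ‖divisorExpSum N t‖ := by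
  calc _ ≤ ∑ i ∈ s, ∫ t in (0 : ℝ)..1, ‖divisorExpSum N t‖ * fejerKernel N (a i - t) := by
        refine Finset.sum_le_sum fun i _ => ?_
        rw [divisorFejerMean_eq_integral]
        refine (intervalIntegral.norm_integral_le_integral_norm zero_le_one).trans_eq ?_
        simp_rw [norm_mul, Complex.norm_real, Real.norm_of_nonneg (fejerKernel_nonneg _ _)]
    _ = ∫ t in (0 : ℝ)..1, ‖divisorExpSum N t‖ * ∑ i ∈ s, fejerKernel N (a i - t) := by
        simp_rw [Finset.mul_sum]
        rw [intervalIntegral.integral_finsetSum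
          fun j _ => Continuous.intervalIntegrable (by fun_prop) _ _]
    _ ≤ ∫ t in (0 : ℝ)..1, (N * ∑' j : ℤ, 6 / (1 + (j : ℝ) ^ 2)) * ‖divisorExpSum N t‖ := by
        refine intervalIntegral.integral_mono zero_le_one
          (Continuous.intervalIntegrable (by fun_prop) _ _)
          (Continuous.intervalIntegrable (by fun_prop) _ _) fun t => ?_
        rw [mul_comm]
        gcongr
        exact sum_fejerKernel_le hN s a ha t
    _ = _ := intervalIntegral.integral_const_mul _ _

/-- Summation by parts for cosine sums, in terms of second differences. -/
lemma two_sub_two_cos_mul_sum (c : ℕ → ℝ) (t : ℝ) (M : ℕ) :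
    (2 - 2 * Real.cos t) * (c 0 + 2 * ∑ m ∈ range M, c (m + 1) * Real.cos ((m + 1 : ℕ) * t)) =
      2 * (c 0 - c 1)
        - 2 * ∑ m ∈ range M, (c (m + 2) - 2 * c (m + 1) + c m) * Real.cos ((m + 1 : ℕ) * t)
        + (2 * c (M + 1) * Real.cos (M * t) - 2 * c M * Real.cos ((M + 1 : ℕ) * t)) := by
  induction M with
  | zero =>
    simp
    ring
  | succ M ih =>
    rw [Finset.sum_range_succ, Finset.sum_range_succ]
    have h : 2 * Real.cos t * Real.cos ((M + 1 : ℕ) * t) =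
        Real.cos ((M + 1 + 1 : ℕ) * t) + Real.cos (M * t) := by
      have h1 : ((M + 1 + 1 : ℕ) : ℝ) * t = (M + 1 : ℕ) * t + t := by push_cast; ring
      have h2 : (M : ℝ) * t = (M + 1 : ℕ) * t - t := by push_cast; ring
      rw [h1, h2, Real.cos_add, Real.cos_sub]
      ring
    linear_combination ih - 2 * c (M + 1) * h

lemma abs_two_sub_two_cos_mul_sum_le (c : ℕ → ℝ) (t : ℝ) (M : ℕ) (h1 : c M = 0)
    (h2 : c (M + 1) = 0) :
    (2 - 2 * Real.cos t) * |c 0 + 2 * ∑ m ∈ range M, c (m + 1) * Real.cos ((m + 1 : ℕ) * t)| ≤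
      2 * |c 0 - c 1| + 2 * ∑ m ∈ range M, |c (m + 2) - 2 * c (m + 1) + c m| := by
  have h0 : 0 ≤ 2 - 2 * Real.cos t := by linarith [Real.cos_le_one t]
  rw [← abs_of_nonneg h0, ← abs_mul, two_sub_two_cos_mul_sum, h1, h2]
  simp only [mul_zero, zero_mul, sub_zero, add_zero]
  refine (abs_sub _ _).trans ?_
  rw [abs_mul, abs_mul, abs_two]
  gcongr
  refine (Finset.abs_sum_le_sum_abs _ _).trans (Finset.sum_le_sum fun m _ => ?_)
  rw [abs_mul]
  exact mul_le_of_le_one_right (abs_nonneg _) (Real.abs_cos_le_one _)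

lemma sum_abs_second_diff_le_of_convex {h : ℕ → ℝ} {L : ℝ}
    (hconv : ∀ m, 0 ≤ h (m + 2) - 2 * h (m + 1) + h m) (hL : ∀ m, |h (m + 1) - h m| ≤ L) (M : ℕ) :
    ∑ m ∈ range M, |h (m + 2) - 2 * h (m + 1) + h m| ≤ 2 * L := by
  have h1 : ∑ m ∈ range M, |h (m + 2) - 2 * h (m + 1) + h m| =
      ∑ m ∈ range M, ((h (m + 1 + 1) - h (m + 1)) - (h (m + 1) - h m)) := by
    refine Finset.sum_congr rfl fun m _ => ?_
    rw [abs_of_nonneg (hconv m)]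
    ring_nf
  rw [h1, Finset.sum_range_sub (fun m => h (m + 1) - h m)]
  have a := abs_le.1 (hL M)
  have b := abs_le.1 (hL 0)
  linarith [a.2, b.1]

lemma sum_abs_second_diff_mul_le {f g : ℕ → ℝ} {F G F₁ G₁ F₂ G₂ : ℝ} {M : ℕ}
    (hF : ∀ m, |f m| ≤ F) (hG : ∀ m, |g m| ≤ G)
    (hF₁ : ∀ K, ∑ m ∈ range K, |f (m + 1) - f m| ≤ F₁) (hG₁ : ∀ m, |g (m + 1) - g m| ≤ G₁)
    (hF₂ : ∑ m ∈ range M, |f (m + 2) - 2 * f (m + 1) + f m| ≤ F₂)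
    (hG₂ : ∑ m ∈ range M, |g (m + 2) - 2 * g (m + 1) + g m| ≤ G₂) :
    ∑ m ∈ range M, |f (m + 2) * g (m + 2) - 2 * (f (m + 1) * g (m + 1)) + f m * g m| ≤
      F * G₂ + F₂ * G + 2 * F₁ * G₁ := by
  have hF0 : 0 ≤ F := (abs_nonneg _).trans (hF 0)
  have hG0 : 0 ≤ G := (abs_nonneg _).trans (hG 0)
  have hG₁0 : 0 ≤ G₁ := (abs_nonneg _).trans (hG₁ 0)
  have hshift : ∑ m ∈ range M, |f (m + 2) - f (m + 1)| ≤ F₁ := by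
    refine le_trans ?_ (hF₁ (M + 1))
    rw [Finset.sum_range_succ']
    exact le_add_of_nonneg_right (abs_nonneg _)
  calc _ ≤ ∑ m ∈ range M, (F * |g (m + 2) - 2 * g (m + 1) + g m|
        + |f (m + 2) - 2 * f (m + 1) + f m| * G
        + (|f (m + 2) - f (m + 1)| * G₁ + |f (m + 1) - f m| * G₁)) := by
        refine Finset.sum_le_sum fun m _ => ?_
        have e : f (m + 2) * g (m + 2) - 2 * (f (m + 1) * g (m + 1)) + f m * g m =
            f (m + 1) * (g (m + 2) - 2 * g (m + 1) + g m)
            + (f (m + 2) - 2 * f (m + 1) + f m) * g (m + 1)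
            + ((f (m + 2) - f (m + 1)) * (g (m + 2) - g (m + 1))
              + (f (m + 1) - f m) * (g (m + 1) - g m)) := by ring
        rw [e]
        refine (abs_add_le _ _).trans (add_le_add ((abs_add_le _ _).trans ?_)
          ((abs_add_le _ _).trans ?_))
        · rw [abs_mul, abs_mul]
          gcongr
          · exact hF _
          · exact hG _
        · rw [abs_mul, abs_mul]
          gcongr
          · exact hG₁ _
          · exact hG₁ _
    _ = F * ∑ m ∈ range M, |g (m + 2) - 2 * g (m + 1) + g m|
        + (∑ m ∈ range M, |f (m + 2) - 2 * f (m + 1) + f m|) * G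
        + ((∑ m ∈ range M, |f (m + 2) - f (m + 1)|) * G₁
          + (∑ m ∈ range M, |f (m + 1) - f m|) * G₁) := by
        simp only [Finset.sum_add_distrib, Finset.mul_sum, Finset.sum_mul]
    _ ≤ F * G₂ + F₂ * G + (F₁ * G₁ + F₁ * G₁) := by
        gcongr
        exact hF₁ M
    _ = _ := by ring

/-- The trapezoidal cutoff, equal to `1` on `[0, X]` and to `0` on `[2X, ∞)`. -/
noncomputable def trapezoid (X m : ℕ) : ℝ := 1 - ((m - X : ℕ) : ℝ) / X + ((m - 2 * X : ℕ) : ℝ) / X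

lemma trapezoid_of_le {X m : ℕ} (h : m ≤ X) : trapezoid X m = 1 := by
  simp [trapezoid, Nat.sub_eq_zero_of_le h, Nat.sub_eq_zero_of_le (show m ≤ 2 * X by omega)]

lemma trapezoid_of_ge {X m : ℕ} (hX : 0 < X) (h : 2 * X ≤ m) : trapezoid X m = 0 := by
  have hX' : (0 : ℝ) < X := by exact_mod_cast hX
  rw [trapezoid, Nat.cast_sub h, Nat.cast_sub (by omega)]
  push_cast
  field_simp
  ring

lemma trapezoid_le_one {X : ℕ} (hX : 0 < X) (m : ℕ) : trapezoid X m ≤ 1 := by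
  have hX' : (0 : ℝ) < X := by exact_mod_cast hX
  have : ((m - 2 * X : ℕ) : ℝ) ≤ (m - X : ℕ) := by
    exact_mod_cast (by omega : m - 2 * X ≤ m - X)
  have : ((m - 2 * X : ℕ) : ℝ) / X ≤ (m - X : ℕ) / X := by gcongr
  rw [trapezoid]
  linarith

lemma trapezoid_antitone {X : ℕ} (hX : 0 < X) : Antitone (trapezoid X) := by
  have hX' : (0 : ℝ) < X := by exact_mod_cast hX
  refine antitone_nat_of_succ_le fun m => ?_
  have : ((m + 1 - 2 * X : ℕ) : ℝ) + (m - X : ℕ) ≤ (m + 1 - X : ℕ) + (m - 2 * X : ℕ) := by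
    exact_mod_cast (by omega : m + 1 - 2 * X + (m - X) ≤ m + 1 - X + (m - 2 * X))
  have : ((m + 1 - 2 * X : ℕ) + (m - X : ℕ) : ℝ) / X ≤ ((m + 1 - X : ℕ) + (m - 2 * X : ℕ)) / X := by
    gcongr
  rw [add_div, add_div] at this
  rw [trapezoid, trapezoid]
  linarith

lemma trapezoid_nonneg {X : ℕ} (hX : 0 < X) (m : ℕ) : 0 ≤ trapezoid X m := by
  have h := trapezoid_antitone hX (show m ≤ m + 2 * X by omega)
  rwa [trapezoid_of_ge hX (by omega)] at h

lemma sum_abs_second_diff_sub_le (Y M : ℕ) :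
    ∑ m ∈ range M, |((m + 2 - Y : ℕ) : ℝ) - 2 * ((m + 1 - Y : ℕ) : ℝ) + ((m - Y : ℕ) : ℝ)| ≤ 2 := by
  have := sum_abs_second_diff_le_of_convex (h := fun m => ((m - Y : ℕ) : ℝ)) (L := 1)
    (fun m => ?_) (fun m => ?_) M
  · simpa using this
  · have : (2 * (m + 1 - Y : ℕ) : ℝ) ≤ (m + 2 - Y : ℕ) + (m - Y : ℕ) := by
      exact_mod_cast (by omega : 2 * (m + 1 - Y) ≤ m + 2 - Y + (m - Y))
    linarith
  · have h1 : ((m - Y : ℕ) : ℝ) ≤ (m + 1 - Y : ℕ) := by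
      exact_mod_cast (by omega : m - Y ≤ m + 1 - Y)
    have h2 : ((m + 1 - Y : ℕ) : ℝ) ≤ (m - Y : ℕ) + 1 := by
      exact_mod_cast (by omega : m + 1 - Y ≤ m - Y + 1)
    rw [abs_le]
    constructor <;> linarith

lemma sum_abs_second_diff_trapezoid_le {X : ℕ} (hX : 0 < X) (M : ℕ) :
    ∑ m ∈ range M, |(2 - trapezoid X (m + 2)) - 2 * (2 - trapezoid X (m + 1))
      + (2 - trapezoid X m)| ≤ 4 / X := by
  have hX' : (0 : ℝ) < X := by exact_mod_cast hX
  have h1 := sum_abs_second_diff_sub_le X M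
  have h2 := sum_abs_second_diff_sub_le (2 * X) M
  rw [le_div_iff₀ hX', Finset.sum_mul]
  have : (4 : ℝ) = 2 + 2 := by norm_num
  rw [this]
  refine le_trans ?_ (add_le_add h1 h2)
  rw [← Finset.sum_add_distrib]
  refine Finset.sum_le_sum fun m _ => ?_
  refine le_trans (le_of_eq ?_) (abs_sub _ _)
  nth_rewrite 1 [← abs_of_pos hX']
  rw [← abs_mul]
  congr 1
  simp only [trapezoid]
  field_simp
  ring

/-- The weight `max(0, 1 - n/N)`. -/
noncomputable def fejerWeight (N n : ℕ) : ℝ := ((N - n : ℕ) : ℝ) / N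

lemma fejerWeight_nonneg (N n : ℕ) : 0 ≤ fejerWeight N n := by
  unfold fejerWeight
  positivity

lemma fejerWeight_le_one (N n : ℕ) : fejerWeight N n ≤ 1 := by
  unfold fejerWeight
  exact div_le_one_of_le₀ (by exact_mod_cast Nat.sub_le N n) (by positivity)

lemma fejerWeight_of_le {N n : ℕ} (h : N ≤ n) : fejerWeight N n = 0 := by
  simp [fejerWeight, Nat.sub_eq_zero_of_le h]

lemma abs_fejerWeight_mul_succ_sub_le (N u m : ℕ) :
    |fejerWeight N (u * (m + 1)) - fejerWeight N (u * m)| ≤ u / N := by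
  have h1 : ((N - u * (m + 1) : ℕ) : ℝ) ≤ (N - u * m : ℕ) := by
    exact_mod_cast (by rw [mul_add]; omega : N - u * (m + 1) ≤ N - u * m)
  have h2 : ((N - u * m : ℕ) : ℝ) ≤ (N - u * (m + 1) : ℕ) + u := by
    exact_mod_cast (by rw [mul_add]; omega : N - u * m ≤ N - u * (m + 1) + u)
  rw [fejerWeight, fejerWeight, ← sub_div, abs_div, Nat.abs_cast]
  gcongr
  rw [abs_le]
  constructor <;> linarith

lemma sum_abs_second_diff_fejerWeight_le (N u M : ℕ) :
    ∑ m ∈ range M, |fejerWeight N (u * (m + 2)) - 2 * fejerWeight N (u * (m + 1))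
      + fejerWeight N (u * m)| ≤ 2 * (u / N) := by
  refine sum_abs_second_diff_le_of_convex (h := fun m => fejerWeight N (u * m)) (fun m => ?_)
    (abs_fejerWeight_mul_succ_sub_le N u) M
  have h1 : (2 * (N - u * (m + 1) : ℕ) : ℝ) ≤ (N - u * (m + 2) : ℕ) + (N - u * m : ℕ) := by
    exact_mod_cast (by simp only [mul_add]; omega :
      2 * (N - u * (m + 1)) ≤ N - u * (m + 2) + (N - u * m))
  simp only [fejerWeight]
  rw [show ((N - u * (m + 2) : ℕ) : ℝ) / N - 2 * (((N - u * (m + 1) : ℕ) : ℝ) / N)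
    + ((N - u * m : ℕ) : ℝ) / N = (((N - u * (m + 2) : ℕ) : ℝ) + (N - u * m : ℕ)
    - 2 * (N - u * (m + 1) : ℕ)) / N by ring]
  exact div_nonneg (by linarith) (by positivity)

/-- The coefficients of the inner sum of the smoothed hyperbola method. -/
noncomputable def hyperbolaCoeff (N X u m : ℕ) : ℝ :=
  (2 - trapezoid X m) * fejerWeight N (u * m)

/-- The inner cosine sum of the smoothed hyperbola method. -/
noncomputable def hyperbolaKernel (N X u : ℕ) (t : ℝ) : ℝ :=
  1 + 2 * ∑ m ∈ range N, hyperbolaCoeff N X u (m + 1) * Real.cos ((m + 1 : ℕ) * t)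

lemma hyperbolaCoeff_nonneg {X : ℕ} (hX : 0 < X) (N u m : ℕ) : 0 ≤ hyperbolaCoeff N X u m :=
  mul_nonneg (by linarith [trapezoid_le_one hX m]) (fejerWeight_nonneg _ _)

lemma abs_hyperbolaKernel_mul_sin_sq_le {N X u : ℕ} (hN : 0 < N) (hX : 0 < X) (hu : 0 < u)
    (hXN : X ^ 2 ≤ 4 * N) (huX : u ≤ 2 * X) (t : ℝ) :
    |hyperbolaKernel N X u (2 * t)| * Real.sin t ^ 2 ≤ 30 / X := by
  have hX' : (0 : ℝ) < X := by exact_mod_cast hX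
  have hN' : (0 : ℝ) < N := by exact_mod_cast hN
  set c := hyperbolaCoeff N X u with hc
  have hNu : N ≤ u * N := Nat.le_mul_of_pos_left N hu
  have c0 : c 0 = 1 := by
    simp [hc, hyperbolaCoeff, trapezoid_of_le, fejerWeight, hN'.ne']
    norm_num
  have c1 : c N = 0 := by
    rw [hc, hyperbolaCoeff, fejerWeight_of_le hNu, mul_zero]
  have c2 : c (N + 1) = 0 := by
    rw [hc, hyperbolaCoeff, fejerWeight_of_le (by rw [mul_add]; omega), mul_zero]
  have h := abs_two_sub_two_cos_mul_sum_le c (2 * t) N c1 c2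
  have hd0 : |c 0 - c 1| ≤ u / N := by
    have := abs_fejerWeight_mul_succ_sub_le N u 0
    rw [abs_sub_comm] at this
    simp only [hc, hyperbolaCoeff, trapezoid_of_le (Nat.zero_le X),
      trapezoid_of_le (show 1 ≤ X from hX)]
    norm_num
    simpa using this
  have hd : ∑ m ∈ range N, |c (m + 2) - 2 * c (m + 1) + c m| ≤
      2 * (2 * (u / N)) + 4 / X * 1 + 2 * 1 * (u / N) := by
    refine sum_abs_second_diff_mul_le (f := fun m => 2 - trapezoid X m)
      (g := fun m => fejerWeight N (u * m)) (fun m => ?_) (fun m => ?_) (fun K => ?_)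
      (abs_fejerWeight_mul_succ_sub_le N u) (sum_abs_second_diff_trapezoid_le hX N)
      (sum_abs_second_diff_fejerWeight_le N u N)
    · have := trapezoid_le_one hX m
      have := trapezoid_nonneg hX m
      rw [abs_le]
      constructor <;> linarith
    · rw [abs_of_nonneg (fejerWeight_nonneg _ _)]
      exact fejerWeight_le_one _ _
    · have e : ∀ m, |2 - trapezoid X (m + 1) - (2 - trapezoid X m)| =
          (- trapezoid X (m + 1)) - (- trapezoid X m) := by
        intro m
        have := trapezoid_antitone hX (Nat.le_succ m)
        rw [Nat.succ_eq_add_one] at this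
        rw [abs_of_nonneg (by linarith)]
        ring
      simp_rw [e]
      rw [Finset.sum_range_sub (fun m => - trapezoid X m)]
      have := trapezoid_nonneg hX K
      have := trapezoid_le_one hX 0
      linarith
  have hker : c 0 + 2 * ∑ m ∈ range N, c (m + 1) * Real.cos ((m + 1 : ℕ) * (2 * t)) =
      hyperbolaKernel N X u (2 * t) := by
    rw [c0, hyperbolaKernel]
  rw [hker, Real.cos_two_mul] at h
  have hs := Real.sin_sq_add_cos_sq t
  have huN : (u : ℝ) / N ≤ 8 / X := by
    rw [div_le_div_iff₀ hN' hX']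
    have h1 : (u : ℝ) ≤ 2 * X := by exact_mod_cast huX
    have h2 : (X : ℝ) ^ 2 ≤ 4 * N := by exact_mod_cast hXN
    nlinarith
  have h3 : 4 * (|hyperbolaKernel N X u (2 * t)| * Real.sin t ^ 2) ≤ 14 * (u / N) + 8 / X := by
    calc _ = (2 - 2 * (2 * Real.cos t ^ 2 - 1)) * |hyperbolaKernel N X u (2 * t)| := by
          rw [show Real.cos t ^ 2 = 1 - Real.sin t ^ 2 by linarith]
          ring
      _ ≤ _ := h
      _ ≤ 2 * (u / N) + 2 * (2 * (2 * (u / N)) + 4 / X * 1 + 2 * 1 * (u / N)) := by gcongr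
      _ = _ := by ring
  have h4 : 14 * (8 / X) + 8 / X = 4 * (30 / X : ℝ) := by ring
  linarith

lemma one_le_hyperbolaKernel {N X u : ℕ} (hX : 0 < X) (k : ℤ) :
    1 ≤ hyperbolaKernel N X u (k * (2 * Real.pi)) := by
  unfold hyperbolaKernel
  have : 0 ≤ ∑ m ∈ range N, hyperbolaCoeff N X u (m + 1) *
      Real.cos ((m + 1 : ℕ) * (k * (2 * Real.pi))) := by
    refine Finset.sum_nonneg fun m _ => mul_nonneg (hyperbolaCoeff_nonneg hX _ _ _) ?_
    rw [← mul_assoc]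
    have := Real.cos_int_mul_two_pi ((m + 1 : ℕ) * k)
    push_cast at this ⊢
    rw [this]
    exact zero_le_one
  linarith

lemma le_hyperbolaKernel_resonant {N X q : ℕ} (hN : 0 < N) (hX : 0 < X) (hq : 0 < q) (k : ℤ) :
    (N : ℝ) / (2 * q) ≤ hyperbolaKernel N X q (k * (2 * Real.pi)) := by
  have hN' : (0 : ℝ) < N := by exact_mod_cast hN
  have hq' : (0 : ℝ) < q := by exact_mod_cast hq
  have h1 : ∀ m : ℕ, Real.cos ((m + 1 : ℕ) * (k * (2 * Real.pi))) = 1 := by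
    intro m
    rw [← mul_assoc]
    have := Real.cos_int_mul_two_pi ((m + 1 : ℕ) * k)
    push_cast at this ⊢
    exact this
  simp only [hyperbolaKernel, h1, mul_one]
  set K := N / (2 * q) with hK
  have hKN : K ≤ N := Nat.div_le_self _ _
  have h2 : (K : ℝ) * (1 / 2) ≤ ∑ m ∈ range N, hyperbolaCoeff N X q (m + 1) := by
    calc (K : ℝ) * (1 / 2) = ∑ m ∈ range K, (1 / 2 : ℝ) := by simp
      _ ≤ ∑ m ∈ range K, hyperbolaCoeff N X q (m + 1) := by
        refine Finset.sum_le_sum fun m hm => ?_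
        have hm' : (m + 1) * (2 * q) ≤ N :=
          (Nat.mul_le_mul_right _ (mem_range.1 hm)).trans (Nat.div_mul_le_self _ _)
        have hm2 : q * (m + 1) ≤ N := by linarith
        have h3 : 1 / 2 ≤ fejerWeight N (q * (m + 1)) := by
          rw [fejerWeight, le_div_iff₀ hN', Nat.cast_sub hm2]
          have : (((m + 1) * (2 * q) : ℕ) : ℝ) ≤ N := by exact_mod_cast hm'
          push_cast at this ⊢
          linarith
        have h4 := trapezoid_le_one hX (m + 1)
        rw [hyperbolaCoeff]
        nlinarith
      _ ≤ _ := by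
        refine Finset.sum_le_sum_of_subset_of_nonneg (range_subset_range.2 hKN) fun m _ _ => ?_
        exact hyperbolaCoeff_nonneg hX _ _ _
  have h5 : (N : ℝ) / (2 * q) ≤ K + 1 := by
    rw [div_le_iff₀ (by positivity)]
    have := Nat.lt_mul_div_succ N (show 0 < 2 * q by omega)
    rw [← hK] at this
    have h6 : (N : ℝ) ≤ (2 * q * (K + 1) : ℕ) := by exact_mod_cast this.le
    push_cast at h6
    linarith
  linarith

/-- `1 / sin² (πr/q)`, with the value `0` at `r = 0`. -/
noncomputable def invSinSq (q r : ℕ) : ℝ := ((Real.sin (Real.pi * (r / q))) ^ 2)⁻¹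

lemma invSinSq_nonneg (q r : ℕ) : 0 ≤ invSinSq q r := by
  unfold invSinSq
  positivity

lemma invSinSq_mod {q : ℕ} (hq : 0 < q) (n : ℕ) : invSinSq q (n % q) = invSinSq q n := by
  have hq' : (q : ℝ) ≠ 0 := by exact_mod_cast hq.ne'
  have h : Real.pi * ((n : ℝ) / q) = Real.pi * ((n % q : ℕ) / q) + (n / q : ℕ) * Real.pi := by
    have : (n : ℝ) = (n % q : ℕ) + q * (n / q : ℕ) := by exact_mod_cast (Nat.mod_add_div n q).symm
    rw [this]
    field_simp
  rw [invSinSq, invSinSq, h, Real.sin_add_nat_mul_pi, mul_pow, ← pow_mul, mul_comm (n / q) 2,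
    pow_mul]
  simp

lemma sum_invSinSq_le (q : ℕ) : ∑ r ∈ range q, invSinSq q r ≤ (q : ℝ) ^ 2 := by
  rcases Nat.eq_zero_or_pos q with rfl | hq
  · simp
  have hq' : (0 : ℝ) < q := by exact_mod_cast hq
  have h0 : ∑ r ∈ range q, invSinSq q r = ∑ r ∈ Ioo 0 q, invSinSq q r := by
    symm
    refine Finset.sum_subset (fun r hr => ?_) fun r hr hr' => ?_
    · simp only [mem_Ioo, mem_range] at hr ⊢
      exact hr.2
    · simp only [mem_Ioo, mem_range] at hr hr'
      have : r = 0 := by omega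
      simp [this, invSinSq]
  have h1 : ∀ r ∈ Ioo 0 q, invSinSq q r ≤
      (q : ℝ) ^ 2 / 4 * (((r : ℝ) ^ 2)⁻¹ + (((q - r : ℕ) : ℝ) ^ 2)⁻¹) := by
    intro r hr
    rw [mem_Ioo] at hr
    have hr0 : (0 : ℝ) < r := by exact_mod_cast hr.1
    have hrq : (r : ℝ) < q := by exact_mod_cast hr.2
    rw [Nat.cast_sub hr.2.le]
    have hs : (0 : ℝ) < q - r := by linarith
    have hle : (r : ℝ) / q ≤ 1 := by rw [div_le_one hq']; exact hrq.le
    have h := two_mul_min_le_sin (t := (r : ℝ) / q) (by positivity) hle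
    have key : ∀ b : ℝ, 0 < b → 2 * (b / q) ≤ Real.sin (Real.pi * (r / q)) →
        invSinSq q r ≤ (q : ℝ) ^ 2 / 4 * (b ^ 2)⁻¹ := by
      intro b hb hb'
      have hp : 0 < 2 * (b / q) := by positivity
      calc invSinSq q r ≤ ((2 * (b / q)) ^ 2)⁻¹ := by
            unfold invSinSq
            gcongr
        _ = _ := by
            field_simp
            norm_num
    have p1 : 0 ≤ (q : ℝ) ^ 2 / 4 * ((r : ℝ) ^ 2)⁻¹ := by positivity
    have p2 : 0 ≤ (q : ℝ) ^ 2 / 4 * (((q : ℝ) - r) ^ 2)⁻¹ := by positivity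
    rw [mul_add]
    rcases le_total ((r : ℝ) / q) (1 - r / q) with h' | h'
    · rw [min_eq_left h'] at h
      have := key r hr0 h
      linarith
    · rw [min_eq_right h', show 1 - (r : ℝ) / q = (q - r) / q by field_simp] at h
      have := key (q - r) hs h
      linarith
  have h2 : ∑ r ∈ Ioo 0 q, (((q - r : ℕ) : ℝ) ^ 2)⁻¹ = ∑ r ∈ Ioo 0 q, ((r : ℝ) ^ 2)⁻¹ := by
    refine Finset.sum_nbij' (fun r => q - r) (fun r => q - r) ?_ ?_ ?_ ?_ fun _ _ => rfl
    all_goals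
      intro r hr
      simp only [mem_Ioo] at hr ⊢
      omega
  have h3 : ∑ r ∈ Ioo 0 q, ((r : ℝ) ^ 2)⁻¹ ≤ 2 := by simpa using sum_Ioo_inv_sq_le (α := ℝ) 0 q
  rw [h0]
  refine (Finset.sum_le_sum h1).trans ?_
  rw [← Finset.mul_sum, Finset.sum_add_distrib, h2]
  nlinarith [sq_nonneg (q : ℝ)]

lemma sum_invSinSq_mul_le {a q : ℕ} (hq : 0 < q) (h : a.Coprime q) (M : ℕ) :
    ∑ u ∈ range M, invSinSq q (u * a) ≤ ((M : ℝ) / q + 1) * q ^ 2 := by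
  have hq' : (0 : ℝ) < q := by exact_mod_cast hq
  have hblock : ∀ b, ∑ i ∈ range q, invSinSq q ((b + i) * a) ≤ (q : ℝ) ^ 2 := by
    intro b
    have hinj : Set.InjOn (fun i => (b + i) * a % q) (range q) := by
      intro i hi j hj hij
      rw [coe_range, Set.mem_Iio] at hi hj
      have h1 : (b + i) * a ≡ (b + j) * a [MOD q] := hij
      have h2 : i ≡ j [MOD q] :=
        Nat.ModEq.add_left_cancel' b (Nat.ModEq.cancel_right_of_coprime h.symm h1)
      rwa [Nat.ModEq, Nat.mod_eq_of_lt hi, Nat.mod_eq_of_lt hj] at h2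
    simp_rw [fun i => (invSinSq_mod hq ((b + i) * a)).symm]
    rw [← Finset.sum_image (f := invSinSq q) hinj]
    refine (Finset.sum_le_sum_of_subset_of_nonneg ?_ fun r _ _ => invSinSq_nonneg q r).trans
      (sum_invSinSq_le q)
    intro r hr
    obtain ⟨i, -, rfl⟩ := mem_image.1 hr
    exact mem_range.2 (Nat.mod_lt _ hq)
  have hJ : ∀ J : ℕ, ∑ u ∈ range (J * q), invSinSq q (u * a) ≤ J * (q : ℝ) ^ 2 := by
    intro J
    induction J with
    | zero => simp
    | succ J ih =>
      rw [add_mul, one_mul, Finset.sum_range_add]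
      have := hblock (J * q)
      push_cast
      linarith
  have hM : M ≤ (M / q + 1) * q := by
    have := Nat.lt_mul_div_succ M hq
    rw [mul_comm]
    exact this.le
  calc _ ≤ ∑ u ∈ range ((M / q + 1) * q), invSinSq q (u * a) :=
        Finset.sum_le_sum_of_subset_of_nonneg (range_subset_range.2 hM)
          fun r _ _ => invSinSq_nonneg _ _
    _ ≤ ((M / q + 1 : ℕ) : ℝ) * (q : ℝ) ^ 2 := hJ _
    _ ≤ _ := by
        push_cast
        gcongr
        exact Nat.cast_div_le

lemma divisorFejerMean_re {N X : ℕ} (hNX : N < (X + 1) ^ 2) (α : ℝ) :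
    (divisorFejerMean N α).re = ∑ u ∈ Icc 1 N,
      trapezoid X u * ((hyperbolaKernel N X u (2 * (Real.pi * (u * α))) - 1) / 2) := by
  have h := sum_card_divisors_mul_eq_hyperbola N
    (fun n => ((N - n : ℕ) : ℂ) / N * addExp (n * α))
    (fun n hn => by simp [Nat.sub_eq_zero_of_le hn.le]) (trapezoid X) (by
      intro u m hum
      by_contra! hc
      have h1 : X + 1 ≤ u := by
        by_contra h'
        exact hc.1 (trapezoid_of_le (by omega))
      have h2 : X + 1 ≤ m := by
        by_contra h'
        exact hc.2 (trapezoid_of_le (by omega))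
      have := Nat.mul_le_mul h1 h2
      rw [← sq] at this
      omega)
  rw [divisorFejerMean, h, Complex.re_sum]
  refine Finset.sum_congr rfl fun u _ => ?_
  rw [Complex.re_sum, hyperbolaKernel, add_sub_cancel_left, mul_div_cancel_left₀ _ two_ne_zero,
    Finset.mul_sum, ← Finset.Ico_succ_right_eq_Icc, Finset.sum_Ico_eq_sum_range]
  refine Finset.sum_congr (by simp) fun m _ => ?_
  have e : (trapezoid X u : ℂ) * (2 - trapezoid X (1 + m)) *
      (((N - u * (1 + m) : ℕ) : ℂ) / N * addExp ((u * (1 + m) : ℕ) * α)) =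
      ((trapezoid X u * hyperbolaCoeff N X u (m + 1) : ℝ) : ℂ)
        * addExp ((u * (1 + m) : ℕ) * α) := by
    rw [hyperbolaCoeff, fejerWeight, add_comm 1 m]
    push_cast
    ring
  rw [e, Complex.re_ofReal_mul, addExp_re, mul_assoc]
  congr 3
  push_cast
  ring

/-- At fractions with denominator at most `X / 100`, the Fejér mean is at least `X` in size. -/
lemma le_norm_divisorFejerMean {N X a q : ℕ} (hN : 0 < N) (hNX : N < (X + 1) ^ 2)
    (hXN : X ^ 2 ≤ 4 * N) (hq : 0 < q) (hqX : 100 * q ≤ X) (haq : a.Coprime q) :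
    (X : ℝ) ≤ ‖divisorFejerMean N ((a : ℝ) / q)‖ := by
  have hX : 0 < X := by omega
  have hX' : (0 : ℝ) < X := by exact_mod_cast hX
  have hq' : (0 : ℝ) < q := by exact_mod_cast hq
  have hN' : (0 : ℝ) < N := by exact_mod_cast hN
  have hqX' : 100 * (q : ℝ) ≤ X := by exact_mod_cast hqX
  have hXN' : (X : ℝ) ^ 2 ≤ 4 * N := by exact_mod_cast hXN
  have hqN : q ≤ N := by nlinarith
  refine le_trans ?_ (Complex.re_le_norm _)
  rw [divisorFejerMean_re hNX]
  set g : ℕ → ℝ := fun u => if u < 2 * X then 1 / 2 + 15 / X * invSinSq q (u * a) else 0 with hg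
  have hg0 : ∀ u, 0 ≤ g u := by
    intro u
    simp only [hg]
    split_ifs
    · have := invSinSq_nonneg q (u * a)
      positivity
    · exact le_rfl
  have hterm : ∀ u ∈ Icc 1 N, (if u = q then (N : ℝ) / (4 * q) else 0) - g u ≤ trapezoid X u *
      ((hyperbolaKernel N X u (2 * (Real.pi * (u * ((a : ℝ) / q)))) - 1) / 2) := by
    intro u hu
    rw [mem_Icc] at hu
    have ht0 := trapezoid_nonneg hX u
    have ht1 := trapezoid_le_one hX u
    have hs := invSinSq_nonneg q (u * a)
    have hs' : 0 ≤ 15 / X * invSinSq q (u * a) := by positivity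
    by_cases huX : u < 2 * X
    · have hgu : g u = 1 / 2 + 15 / X * invSinSq q (u * a) := if_pos huX
      by_cases hdvd : q ∣ u
      · obtain ⟨k, rfl⟩ := hdvd
        have harg : 2 * (Real.pi * ((q * k : ℕ) * ((a : ℝ) / q))) =
            ((k * a : ℕ) : ℤ) * (2 * Real.pi) := by
          push_cast
          field_simp
        rw [harg]
        split_ifs with hk
        · have hk1 : k = 1 := by nlinarith
          subst hk1
          rw [mul_one, trapezoid_of_le (by omega), one_mul]
          have := le_hyperbolaKernel_resonant (X := X) hN hX hq ((1 * a : ℕ) : ℤ)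
          have e : (N : ℝ) / (2 * q) = 2 * (N / (4 * q)) := by field_simp; norm_num
          rw [e] at this
          rw [mul_one] at hgu hs'
          linarith
        · have := one_le_hyperbolaKernel (N := N) (u := q * k) hX ((k * a : ℕ) : ℤ)
          have h2 := hg0 (q * k)
          have h3 : 0 ≤ trapezoid X (q * k) * ((hyperbolaKernel N X (q * k)
              (((k * a : ℕ) : ℤ) * (2 * Real.pi)) - 1) / 2) :=
            mul_nonneg ht0 (by linarith)
          linarith
      · have hne : u ≠ q := fun h => hdvd (h ▸ dvd_rfl)
        rw [if_neg hne]
        have hb := abs_hyperbolaKernel_mul_sin_sq_le hN hX hu.1 hXN huX.le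
          (Real.pi * (u * ((a : ℝ) / q)))
        have hsin : Real.sin (Real.pi * (u * ((a : ℝ) / q))) ≠ 0 := by
          rw [Real.sin_ne_zero_iff]
          intro n hn
          have h1 : (n : ℝ) = u * ((a : ℝ) / q) := by
            have := Real.pi_pos
            nlinarith
          have h2 : (n : ℝ) * q = u * a := by
            rw [h1]
            field_simp
          have h3 : n * q = u * a := by exact_mod_cast h2
          have h4 : (q : ℤ) ∣ ((u * a : ℕ) : ℤ) := ⟨n, by push_cast; linarith⟩
          exact hdvd (haq.symm.dvd_of_dvd_mul_right (Int.natCast_dvd_natCast.1 h4))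
        have hinv : invSinSq q (u * a) = (Real.sin (Real.pi * (u * ((a : ℝ) / q))) ^ 2)⁻¹ := by
          rw [invSinSq]
          push_cast
          rw [mul_div_assoc]
        have hb2 : |hyperbolaKernel N X u (2 * (Real.pi * (u * ((a : ℝ) / q))))| ≤
            30 / X * invSinSq q (u * a) := by
          rw [hinv, ← div_eq_mul_inv, le_div_iff₀ (by positivity)]
          exact hb
        have hb3 := (abs_le.1 hb2).1
        have e : 30 / X * invSinSq q (u * a) = 2 * (15 / X * invSinSq q (u * a)) := by ring
        rw [e] at hb3
        rw [hgu]
        nlinarith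
    · rw [trapezoid_of_ge hX (by omega), if_neg (by omega), zero_mul, hg]
      simp [huX]
  refine le_trans ?_ (Finset.sum_le_sum hterm)
  rw [Finset.sum_sub_distrib, Finset.sum_ite_eq', if_pos (mem_Icc.2 ⟨hq, hqN⟩)]
  have hgsum : ∑ u ∈ Icc 1 N, g u ≤ X + 15 / X * ((2 * X / q + 1) * q ^ 2) := by
    calc ∑ u ∈ Icc 1 N, g u = ∑ u ∈ (Icc 1 N).filter (fun u => u < 2 * X),
          (1 / 2 + 15 / X * invSinSq q (u * a)) := (Finset.sum_filter _ _).symm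
      _ ≤ ∑ u ∈ range (2 * X), (1 / 2 + 15 / X * invSinSq q (u * a)) := by
          refine Finset.sum_le_sum_of_subset_of_nonneg (fun u hu => ?_) fun u _ _ => ?_
          · exact mem_range.2 (mem_filter.1 hu).2
          · have := invSinSq_nonneg q (u * a)
            positivity
      _ = X + 15 / X * ∑ u ∈ range (2 * X), invSinSq q (u * a) := by
          rw [Finset.sum_add_distrib, ← Finset.mul_sum]
          simp
          ring
      _ ≤ _ := by
          have := sum_invSinSq_mul_le hq haq (2 * X)
          push_cast at this
          gcongr
  have e1 : 15 / X * ((2 * X / q + 1) * q ^ 2) = 30 * q + 15 * (q * (q / X) : ℝ) := by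
    field_simp
    ring
  have e2 : (q : ℝ) / X ≤ 1 := by
    rw [div_le_one hX']
    linarith
  have e3 : (q : ℝ) * (q / X) ≤ q := mul_le_of_le_one_right hq'.le e2
  have e4 : 6 * (X : ℝ) ≤ N / (4 * q) := by
    rw [le_div_iff₀ (by positivity)]
    nlinarith
  linarith

/-- Pairs `(a, q)` with `1 ≤ a ≤ q ≤ Q` and `a` coprime to `q`. -/
def fareyPairs (Q : ℕ) : Finset (ℕ × ℕ) :=
  (Icc 1 Q ×ˢ Icc 1 Q).filter fun p => p.1.Coprime p.2 ∧ p.1 ≤ p.2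

lemma sq_le_mul_card_fareyPairs (Q : ℕ) : (Q : ℝ) ^ 2 ≤ 24 * (fareyPairs Q).card := by
  set cop := (Icc 1 Q ×ˢ Icc 1 Q).filter fun p => p.1.Coprime p.2 with hcop
  set bad := (Ioo 1 (Q + 1)).biUnion fun d =>
    (Icc 1 (Q / d) ×ˢ Icc 1 (Q / d)).image fun p => (d * p.1, d * p.2) with hbad
  have h1 : Icc 1 Q ×ˢ Icc 1 Q ⊆ cop ∪ bad := by
    rintro ⟨a, b⟩ hab
    by_cases h : a.Coprime b
    · exact mem_union_left _ (mem_filter.2 ⟨hab, h⟩)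
    · refine mem_union_right _ ?_
      simp only [mem_product, mem_Icc] at hab
      have hg0 : 0 < a.gcd b := Nat.gcd_pos_of_pos_left _ (by omega)
      have hg : a.gcd b ≤ a := Nat.gcd_le_left _ (by omega)
      have hg1 : a.gcd b ≠ 1 := h
      simp only [hbad, mem_biUnion, mem_image, mem_product, mem_Icc, mem_Ioo, Prod.exists,
        Prod.mk.injEq]
      refine ⟨a.gcd b, ⟨by omega, by omega⟩, a / a.gcd b, b / a.gcd b, ⟨⟨?_, ?_⟩, ?_, ?_⟩,
        Nat.mul_div_cancel' (Nat.gcd_dvd_left _ _), Nat.mul_div_cancel' (Nat.gcd_dvd_right _ _)⟩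
      · exact Nat.div_pos hg hg0
      · exact Nat.div_le_div_right hab.1.2
      · exact Nat.div_pos (Nat.gcd_le_right _ (by omega)) hg0
      · exact Nat.div_le_div_right hab.2.2
  have h2 : cop ⊆ fareyPairs Q ∪ (fareyPairs Q).image Prod.swap := by
    rintro ⟨a, b⟩ hab
    simp only [hcop, mem_filter, mem_product] at hab
    simp only [fareyPairs, mem_union, mem_image, mem_filter, mem_product, Prod.exists,
      Prod.swap_prod_mk, Prod.mk.injEq]
    rcases le_total a b with h | h
    · exact Or.inl ⟨hab.1, hab.2, h⟩
    · exact Or.inr ⟨b, a, ⟨⟨hab.1.2, hab.1.1⟩, hab.2.symm, h⟩, rfl, rfl⟩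
  have c1 : (Q : ℝ) ^ 2 ≤ cop.card + bad.card := by
    have := (card_le_card h1).trans (card_union_le _ _)
    rw [card_product, Nat.card_Icc, Nat.add_sub_cancel, ← sq] at this
    exact_mod_cast this
  have c2 : (cop.card : ℝ) ≤ 2 * (fareyPairs Q).card := by
    have h := (card_le_card h2).trans (card_union_le _ _)
    have := card_image_le (s := fareyPairs Q) (f := Prod.swap)
    have h' : cop.card ≤ 2 * (fareyPairs Q).card := by omega
    exact_mod_cast h'
  have c3 : (bad.card : ℝ) ≤ (Q : ℝ) ^ 2 * ∑ d ∈ Ioo 1 (Q + 1), ((d : ℝ) ^ 2)⁻¹ := by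
    have h : bad.card ≤ ∑ d ∈ Ioo 1 (Q + 1), (Q / d) ^ 2 := by
      refine card_biUnion_le.trans (Finset.sum_le_sum fun d _ => card_image_le.trans ?_)
      rw [card_product, Nat.card_Icc, Nat.add_sub_cancel, sq]
    calc (bad.card : ℝ) ≤ ((∑ d ∈ Ioo 1 (Q + 1), (Q / d) ^ 2 : ℕ) : ℝ) := by exact_mod_cast h
      _ = ∑ d ∈ Ioo 1 (Q + 1), (((Q / d : ℕ) : ℝ)) ^ 2 := by push_cast; rfl
      _ ≤ ∑ d ∈ Ioo 1 (Q + 1), (Q : ℝ) ^ 2 * ((d : ℝ) ^ 2)⁻¹ := by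
        refine Finset.sum_le_sum fun d _ => ?_
        rw [← div_eq_mul_inv, ← div_pow]
        gcongr
        exact Nat.cast_div_le
      _ = _ := (Finset.mul_sum _ _ _).symm
  have c4 : ∑ d ∈ Ioo 1 (Q + 1), ((d : ℝ) ^ 2)⁻¹ ≤ 11 / 12 := by
    have hsub : Ioo 1 (Q + 1) ⊆ insert 2 (Ioo 2 (Q + 1)) := by
      intro d
      simp only [mem_insert, mem_Ioo]
      omega
    refine (Finset.sum_le_sum_of_subset_of_nonneg hsub fun _ _ _ => by positivity).trans ?_
    rw [Finset.sum_insert (by simp)]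
    have := sum_Ioo_inv_sq_le (α := ℝ) 2 (Q + 1)
    norm_num at this ⊢
    linarith
  nlinarith [sq_nonneg (Q : ℝ)]

lemma fareyPairs_spacing {Q : ℕ} {p r : ℕ × ℕ} (hp : p ∈ fareyPairs Q) (hr : r ∈ fareyPairs Q)
    (hne : p ≠ r) (k : ℤ) :
    1 / (Q : ℝ) ^ 2 ≤ |(p.1 : ℝ) / p.2 - (r.1 : ℝ) / r.2 - k| := by
  obtain ⟨a, b⟩ := p
  obtain ⟨c, d⟩ := r
  simp only [fareyPairs, mem_filter, mem_product, mem_Icc] at hp hr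
  obtain ⟨⟨⟨ha1, -⟩, hb1, hbQ⟩, hab, hab'⟩ := hp
  obtain ⟨⟨⟨hc1, -⟩, hd1, hdQ⟩, hcd, hcd'⟩ := hr
  have hb : (0 : ℝ) < b := by exact_mod_cast hb1
  have hd : (0 : ℝ) < d := by exact_mod_cast hd1
  set n : ℤ := a * d - c * b - k * (b * d) with hn
  have hn0 : n ≠ 0 := by
    intro h0
    have h1 : (a : ℤ) * d - c * b = k * (b * d) := by linarith
    have hpos : (0 : ℤ) < b * d := by positivity
    have h2 : (a : ℤ) * d ≤ b * d := by gcongr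
    have h3 : (c : ℤ) * b ≤ b * d := by
      rw [mul_comm (b : ℤ)]
      gcongr
    have h4 : (0 : ℤ) < a * d := by positivity
    have h5 : (0 : ℤ) < c * b := by positivity
    have hk : k = 0 := by
      have : k < 1 := by nlinarith
      have : -1 < k := by nlinarith
      omega
    rw [hk, zero_mul, sub_eq_zero] at h1
    have h6 : a * d = c * b := by exact_mod_cast h1
    have h7 : b ∣ d := hab.symm.dvd_of_dvd_mul_left ⟨c, by rw [h6, mul_comm]⟩
    have h8 : d ∣ b := hcd.symm.dvd_of_dvd_mul_left ⟨a, by rw [← h6, mul_comm]⟩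
    have h9 : b = d := Nat.dvd_antisymm h7 h8
    subst h9
    exact hne (by rw [Nat.eq_of_mul_eq_mul_right hb1 h6])
  have e : (a : ℝ) / b - (c : ℝ) / d - k = n / (b * d) := by
    rw [hn]
    push_cast
    field_simp
  have hbd : (b : ℝ) * d ≤ (Q : ℝ) ^ 2 := by
    rw [sq]
    have : (b : ℝ) ≤ Q := by exact_mod_cast hbQ
    have : (d : ℝ) ≤ Q := by exact_mod_cast hdQ
    gcongr
  have hn1 : (1 : ℝ) ≤ |(n : ℝ)| := by exact_mod_cast Int.one_le_abs hn0
  rw [e, abs_div, abs_of_pos (mul_pos hb hd)]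
  gcongr

lemma sqrt_le_integral_norm_divisorExpSum {N : ℕ} (hN : 200 ≤ N.sqrt) :
    (N.sqrt : ℝ) ≤ 3840000 * (∑' j : ℤ, 6 / (1 + (j : ℝ) ^ 2)) *
      ∫ t in (0 : ℝ)..1, ‖divisorExpSum N t‖ := by
  set X := N.sqrt with hX
  set Q := X / 100 with hQ
  have h1 : X ^ 2 ≤ N := Nat.sqrt_le' N
  have h2 : N < (X + 1) ^ 2 := Nat.lt_succ_sqrt' N
  have hN0 : 0 < N := by nlinarith
  have hQ1 : X ≤ 200 * Q := by omega
  have hQ2 : 100 * Q ≤ X := by omega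
  have hQ0 : 0 < Q := by omega
  have hX' : (200 : ℝ) ≤ X := by exact_mod_cast hN
  have hNX : (N : ℝ) ≤ 4 * X ^ 2 := by
    have : (N : ℝ) ≤ (X + 1) ^ 2 := by exact_mod_cast h2.le
    nlinarith
  set s := fareyPairs Q with hs
  have hmem : ∀ p ∈ s, 0 < p.2 ∧ p.2 ≤ Q ∧ p.1.Coprime p.2 := by
    intro p hp
    simp only [hs, fareyPairs, mem_filter, mem_product, mem_Icc] at hp
    exact ⟨hp.1.2.1, hp.1.2.2, hp.2.1⟩
  have hsieve := sum_norm_divisorFejerMean_le hN0 s (fun p => (p.1 : ℝ) / p.2) (by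
    intro p hp r hr hne k
    refine le_trans ?_ (fareyPairs_spacing hp hr hne k)
    have : (Q : ℝ) ^ 2 ≤ N := by exact_mod_cast (by nlinarith : Q ^ 2 ≤ N)
    have : (0 : ℝ) < Q := by exact_mod_cast hQ0
    gcongr)
  have hlow : (s.card : ℝ) * X ≤ ∑ p ∈ s, ‖divisorFejerMean N ((p.1 : ℝ) / p.2)‖ := by
    rw [← nsmul_eq_mul]
    refine Finset.card_nsmul_le_sum _ _ _ fun p hp => ?_
    obtain ⟨hp1, hp2, hp3⟩ := hmem p hp
    exact le_norm_divisorFejerMean hN0 h2 (by omega) hp1 (by omega) hp3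
  have hcard := sq_le_mul_card_fareyPairs Q
  rw [← hs] at hcard
  set C := ∑' j : ℤ, 6 / (1 + (j : ℝ) ^ 2) with hC
  set I := ∫ t in (0 : ℝ)..1, ‖divisorExpSum N t‖ with hI
  have hC0 : 0 ≤ C := tsum_nonneg fun j => by positivity
  have hI0 : 0 ≤ I := intervalIntegral.integral_nonneg zero_le_one fun _ _ => norm_nonneg _
  have hXQ : (X : ℝ) ^ 2 ≤ 40000 * (Q : ℝ) ^ 2 := by
    have : (X : ℝ) ≤ 200 * Q := by exact_mod_cast hQ1
    calc (X : ℝ) ^ 2 ≤ (200 * Q) ^ 2 := by gcongr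
      _ = _ := by ring
  have h3 : (X : ℝ) ^ 2 ≤ 960000 * s.card := by linarith
  have h4 : (X : ℝ) ^ 2 * X ≤ (X : ℝ) ^ 2 * (3840000 * C * I) := by
    calc (X : ℝ) ^ 2 * X ≤ 960000 * s.card * X := by gcongr
      _ = 960000 * (s.card * X) := by ring
      _ ≤ 960000 * (N * C * I) := by linarith
      _ ≤ 960000 * (4 * X ^ 2 * C * I) := by gcongr
      _ = _ := by ring
  exact le_of_mul_le_mul_left h4 (by positivity)

/-- Main theorem: there exist positive constants `c₁, c₂` and `x₀` such that for
all `x ≥ x₀`, `c₁ √x ≤ ∫₀¹ |∑_{n ≤ x} τ(n) e(nα)| dα ≤ c₂ √x log x`. -/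
theorem L1_norm_divisor_exponential_sum :
    ∃ c₁ > 0, ∃ c₂ > 0, ∃ x₀ : ℝ, ∀ x ≥ x₀,
      c₁ * Real.sqrt x ≤
        (∫ α in (0:ℝ)..1,
          ‖∑ n ∈ Finset.Icc 1 ⌊x⌋₊, (n.divisors.card : ℂ) *
              Complex.exp (2 * Real.pi * Complex.I * (n * α))‖) ∧
      (∫ α in (0:ℝ)..1,
          ‖∑ n ∈ Finset.Icc 1 ⌊x⌋₊, (n.divisors.card : ℂ) *
              Complex.exp (2 * Real.pi * Complex.I * (n * α))‖) ≤
        c₂ * Real.sqrt x * Real.log x := by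
  have hexp : ∀ N : ℕ, ∀ α : ℝ, ∑ n ∈ Finset.Icc 1 N, (n.divisors.card : ℂ) *
      Complex.exp (2 * Real.pi * Complex.I * (n * α)) = divisorExpSum N α := by
    intro N α
    simp [divisorExpSum, addExp]
  simp only [hexp]
  set C := ∑' j : ℤ, 6 / (1 + (j : ℝ) ^ 2) with hC
  have hC0 : 0 < C := summable_inv_one_add_int_sq.tsum_pos (fun j => by positivity) 0 (by norm_num)
  refine ⟨1 / (7680000 * C), by positivity, 24, by norm_num, 40000, fun x hx => ?_⟩
  set N := ⌊x⌋₊ with hN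
  have hx0 : 0 ≤ x := by linarith
  have hNx : (N : ℝ) ≤ x := Nat.floor_le hx0
  have hxN : x < N + 1 := Nat.lt_floor_add_one x
  have hN' : 40000 ≤ N := Nat.le_floor (by exact_mod_cast hx)
  have hX : 200 ≤ N.sqrt := by
    rw [Nat.le_sqrt]
    omega
  have hX' : (200 : ℝ) ≤ N.sqrt := by exact_mod_cast hX
  constructor
  · have h := sqrt_le_integral_norm_divisorExpSum hX
    rw [← hC] at h
    have h1 : Real.sqrt x ≤ 2 * N.sqrt := by
      rw [Real.sqrt_le_left (by positivity)]
      have : ((N + 1 : ℕ) : ℝ) ≤ ((N.sqrt + 1) ^ 2 : ℕ) := by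
        exact_mod_cast Nat.lt_succ_sqrt' N
      push_cast at this
      nlinarith
    rw [one_div, inv_mul_le_iff₀ (by positivity)]
    linarith
  · have h1 : (N.sqrt : ℝ) ≤ Real.sqrt x :=
      Real.le_sqrt_of_sq_le (le_trans (by exact_mod_cast Nat.sqrt_le' N) hNx)
    have h2 : Real.log (N + 1) ≤ 2 * Real.log x := by
      have : Real.log (x ^ 2) = 2 * Real.log x := by
        rw [Real.log_pow]
        norm_num
      rw [← this]
      exact Real.log_le_log (by positivity) (by nlinarith)
    have h3 : 0 ≤ Real.log (N + 1) := Real.log_nonneg (by linarith)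
    calc _ ≤ 12 * N.sqrt * Real.log (N + 1) := integral_norm_divisorExpSum_le N
      _ ≤ 12 * Real.sqrt x * (2 * Real.log x) := by gcongr
      _ = _ := by ring
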